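/- arXiv:1210.0450 — 2 statements merged into one kernel-verified Lean document; each statement's English description precedes it below -/
import Mathlib

section
/- Let n and n + δ both be perfect numbers. If δ > 1 is odd, then δ does not divide n. -/
/-!
An even perfect number is `2 ^ k * M` with `M = mersenne (k + 1)` prime, and its only odd divisor
greater than `1` is `M`. So if `δ` divides `n`, hence also `n + δ`, then `δ = M`, and the odd number
among `n` and `n + δ` is `M * (2 ^ k - 1)` or `M * (2 ^ k + 1)`. A prime `p ≡ 3 [MOD 4]` cannot
divide an odd perfect number `m` exactly once, since otherwise `4 ∣ p + 1` would divide the divisor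
sum `2 * m`. Therefore `M = 2 ^ (k + 1) - 1` divides `2 ^ k - 1` or `2 ^ k + 1`, which by size
leaves only `k = 1`, where the odd number would be `9`.
-/

section

variable {k m n p t N δ : ℕ}

theorem eq_and_prime_of_mul_sum_properDivisors_eq (hN : 1 < N) (hm : 0 < m)
    (h : N * ∑ d ∈ m.properDivisors, d = m) : m = N ∧ m.Prime := by
  rcases Nat.sum_properDivisors_dvd (Dvd.intro_left N h) with hsum | hsum
  · refine ⟨?_, Nat.sum_properDivisors_eq_one_iff_prime.mp hsum⟩
    rw [← h, hsum, mul_one]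
  · rw [hsum] at h
    exact absurd h (lt_mul_of_one_lt_left hm hN).ne'

theorem sum_divisors_two_pow (k : ℕ) : ∑ d ∈ (2 ^ k).divisors, d = mersenne (k + 1) := by
  rw [Nat.sum_divisors_prime_pow Nat.prime_two, Nat.geomSum_eq le_rfl, mersenne, Nat.div_one]

theorem exists_eq_two_pow_mul_mersenne_of_even_perfect (hn : n.Perfect) (heven : Even n) :
    ∃ k, (mersenne (k + 1)).Prime ∧ n = 2 ^ k * mersenne (k + 1) := by
  obtain ⟨k, m, hm, rfl⟩ := Nat.exists_eq_two_pow_mul_odd hn.2.ne'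
  have hk : k ≠ 0 := by
    rintro rfl
    exact Nat.not_even_iff_odd.mpr hm (by simpa only [pow_zero, one_mul] using heven)
  have hsum : mersenne (k + 1) * (∑ d ∈ m.properDivisors, d + m) = 2 * (2 ^ k * m) := by
    rw [← sum_divisors_two_pow, ← Nat.sum_divisors_eq_sum_properDivisors_add_self,
      ← (hm.coprime_two_left.pow_left k).sum_divisors_mul]
    exact (Nat.perfect_iff_sum_divisors_eq_two_mul hn.2).mp hn
  have hproper : mersenne (k + 1) * ∑ d ∈ m.properDivisors, d = m := by
    have hpow := succ_mersenne (k + 1)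
    rw [← mul_assoc, ← pow_succ', ← hpow] at hsum
    linarith
  obtain ⟨rfl, hprime⟩ :=
    eq_and_prime_of_mul_sum_properDivisors_eq (one_lt_mersenne.mpr (by lia)) hm.pos hproper
  exact ⟨k, hprime, rfl⟩

theorem eq_of_odd_of_dvd_two_pow_mul_prime (hp : p.Prime) (hodd : Odd δ) (hδ : δ ≠ 1)
    (hdvd : δ ∣ 2 ^ k * p) : δ = p :=
  (hp.dvd_iff_eq hδ).mp ((hodd.coprime_two_right.pow_right k).dvd_of_dvd_mul_left hdvd) |>.symm

theorem exists_eq_mersenne_of_odd_dvd_even_perfect (hn : n.Perfect) (heven : Even n)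
    (hodd : Odd δ) (hδ : δ ≠ 1) (hdvd : δ ∣ n) :
    ∃ k, (mersenne (k + 1)).Prime ∧ δ = mersenne (k + 1) ∧ n = 2 ^ k * mersenne (k + 1) := by
  obtain ⟨k, hprime, rfl⟩ := exists_eq_two_pow_mul_mersenne_of_even_perfect hn heven
  exact ⟨k, hprime, eq_of_odd_of_dvd_two_pow_mul_prime hprime hodd hδ hdvd, rfl⟩

theorem dvd_of_odd_of_perfect_prime_mul (hp : p.Prime) (hp4 : p % 4 = 3) (ht : Odd t)
    (hperfect : (p * t).Perfect) : p ∣ t := by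
  by_contra hpt
  have hsum := (Nat.perfect_iff_sum_divisors_eq_two_mul hperfect.2).mp hperfect
  rw [(hp.coprime_iff_not_dvd.mpr hpt).sum_divisors_mul, hp.sum_divisors] at hsum
  have hfour : 4 ∣ 2 * (p * t) := hsum ▸ Dvd.dvd.mul_right (by lia) _
  obtain ⟨r, hr⟩ : Odd (p * t) := (Nat.odd_iff.mpr (by lia)).mul ht
  lia

theorem mersenne_dvd_of_odd_of_perfect_mul (hprime : (mersenne p).Prime) (ht : Odd t)
    (hperfect : (mersenne p * t).Perfect) : mersenne p ∣ t :=
  dvd_of_odd_of_perfect_prime_mul hprime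
    (mersenne_mod_four (one_lt_mersenne.mp hprime.one_lt)) ht hperfect

theorem not_perfect_mersenne_succ_mul_mersenne (hprime : (mersenne (k + 1)).Prime) :
    ¬ (mersenne (k + 1) * mersenne k).Perfect := by
  intro hperfect
  have hk : 0 < k := by simpa using hprime.one_lt
  have hle : mersenne (k + 1) ≤ mersenne k := Nat.le_of_dvd (mersenne_pos.mpr hk)
    (mersenne_dvd_of_odd_of_perfect_mul hprime (mersenne_odd.mpr hk.ne') hperfect)
  exact absurd (mersenne_le_mersenne.mp hle) (by lia)

theorem not_perfect_nine : ¬ Nat.Perfect 9 := by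
  unfold Nat.Perfect
  decide

theorem not_perfect_mersenne_succ_mul_two_pow_add_one (hprime : (mersenne (k + 1)).Prime) :
    ¬ (mersenne (k + 1) * (2 ^ k + 1)).Perfect := by
  intro hperfect
  have hk : 0 < k := by simpa using hprime.one_lt
  have hodd : Odd (2 ^ k + 1) := (even_two.pow_of_ne_zero hk.ne').add_one
  have hle : mersenne (k + 1) ≤ 2 ^ k + 1 :=
    Nat.le_of_dvd (by positivity) (mersenne_dvd_of_odd_of_perfect_mul hprime hodd hperfect)
  have hle_one : k ≤ 1 := by
    rw [← Nat.pow_le_pow_iff_right (a := 2) one_lt_two]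
    have := succ_mersenne (k + 1)
    rw [pow_succ] at this
    lia
  obtain rfl : k = 1 := by lia
  exact not_perfect_nine hperfect

end

theorem stmt_2 (n δ : ℕ) (hδ : 1 < δ) (hodd : Odd δ)
    (hn : Nat.Perfect n) (hnδ : Nat.Perfect (n + δ)) :
    ¬ δ ∣ n := by
  intro hdvd
  rcases n.even_or_odd with heven | hoddn
  · obtain ⟨k, hprime, rfl, rfl⟩ :=
      exists_eq_mersenne_of_odd_dvd_even_perfect hn heven hodd hδ.ne' hdvd
    refine not_perfect_mersenne_succ_mul_two_pow_add_one hprime ?_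
    convert hnδ using 1
    ring
  · obtain ⟨k, hprime, rfl, hsum⟩ := exists_eq_mersenne_of_odd_dvd_even_perfect hnδ
      (hoddn.add_odd hodd) hodd hδ.ne' (hdvd.add dvd_rfl)
    refine not_perfect_mersenne_succ_mul_mersenne hprime ?_
    convert hn using 1
    rw [← succ_mersenne k] at hsum
    linarith
end

section
/- If n and m are distinct perfect numbers, then |n - m| > 2. -/
/-!
If every unit modulo `k > 2` squares to `1` and `n ≡ -1 [MOD k]`, then `d ↦ n / d` pairs each
divisor `d` of `n` with one congruent to `-d`, so `k ∣ σ(n)`. For perfect `n` this says `k ∣ 2n`,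
contradicting `2n ≡ -2`. The moduli `3` and `4` exclude `n ≡ 2 [MOD 3]` and `n ≡ 3 [MOD 4]`.
Multiplicativity of `σ` shows that a perfect `n ≡ 2 [MOD 4]` is a multiple of `6`, and the only
perfect multiple of `6` is `6` itself because `σ(n) / n = ∑_{d ∣ n} 1 / d` strictly increases along
proper divisibility. Hence every perfect number other than `6` is `1`, `4` or `9` modulo `12`. These
classes are at least `3` apart; their only member within `2` of `6` is `4`, which is not perfect.
-/

section UnitsOfExponentTwo

variable {R : Type*} [CommRing R] {a b : R}

lemma sq_eq_one_of_mul_eq_neg_one (hR : ∀ u : Rˣ, u ^ 2 = 1) (hab : a * b = -1) : a ^ 2 = 1 := by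
  obtain ⟨u, rfl⟩ : IsUnit a := .of_mul_eq_one (-b) (by rw [mul_neg, hab, neg_neg])
  rw [← Units.val_pow_eq_pow_val, hR u, Units.val_one]

lemma add_eq_zero_of_mul_eq_neg_one (hR : ∀ u : Rˣ, u ^ 2 = 1) (hab : a * b = -1) :
    a + b = 0 := by
  have ha : a ^ 2 = 1 := sq_eq_one_of_mul_eq_neg_one hR hab
  linear_combination a * hab - b * ha

end UnitsOfExponentTwo

section SumDivisors

variable {k m n : ℕ}

theorem dvd_sum_divisors_of_dvd_add_one (hk : 2 < k) (hunits : ∀ u : (ZMod k)ˣ, u ^ 2 = 1)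
    (hkn : k ∣ n + 1) : k ∣ ∑ d ∈ n.divisors, d := by
  have hn : (n : ZMod k) = -1 :=
    eq_neg_of_add_eq_zero_left (by exact_mod_cast (ZMod.natCast_eq_zero_iff _ _).2 hkn)
  have two_ne_zero_mod : (2 : ZMod k) ≠ 0 := fun h ↦
    Nat.not_dvd_of_pos_of_lt two_pos hk ((ZMod.natCast_eq_zero_iff 2 k).1 (by exact_mod_cast h))
  have mul_div_eq_neg_one {d : ℕ} (hd : d ∈ n.divisors) : (d : ZMod k) * (n / d : ℕ) = -1 := by
    rw [← Nat.cast_mul, Nat.mul_div_cancel' (Nat.dvd_of_mem_divisors hd), hn]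
  rw [← ZMod.natCast_eq_zero_iff, Nat.cast_sum]
  refine Finset.sum_involution (fun d _ ↦ n / d) (fun d hd ↦ ?_) (fun d hd _ hfix ↦ ?_)
    (fun d hd ↦ ?_) (fun d hd ↦ ?_)
  · exact add_eq_zero_of_mul_eq_neg_one hunits (mul_div_eq_neg_one hd)
  · have mul_self_eq_neg_one : (d : ZMod k) * d = -1 := by
      simpa only [hfix] using mul_div_eq_neg_one hd
    have sq_eq_one : (d : ZMod k) ^ 2 = 1 :=
      sq_eq_one_of_mul_eq_neg_one hunits mul_self_eq_neg_one
    exact two_ne_zero_mod (by linear_combination mul_self_eq_neg_one - sq_eq_one)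
  · exact Nat.mem_divisors.2
      ⟨Nat.div_dvd_of_dvd (Nat.dvd_of_mem_divisors hd), Nat.ne_zero_of_mem_divisors hd⟩
  · exact Nat.div_div_self (Nat.dvd_of_mem_divisors hd) (Nat.ne_zero_of_mem_divisors hd)

lemma abundancyIndex_eq_sum_inv (n : ℕ) :
    n.abundancyIndex = ∑ d ∈ n.divisors, (d : ℚ)⁻¹ := by
  rw [Nat.abundancyIndex, ← Nat.sum_div_divisors n fun d ↦ (d : ℚ)⁻¹, Nat.cast_sum, Finset.sum_div]
  refine Finset.sum_congr rfl fun d hd ↦ ?_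
  rw [Nat.cast_div_charZero (Nat.dvd_of_mem_divisors hd), inv_div]

theorem abundancyIndex_lt_of_dvd_of_ne (hn : n ≠ 0) (hmn : m ∣ n) (hne : m ≠ n) :
    m.abundancyIndex < n.abundancyIndex := by
  have n_notMem : n ∉ m.divisors := fun h ↦
    hne (Nat.dvd_antisymm hmn (Nat.dvd_of_mem_divisors h))
  rw [abundancyIndex_eq_sum_inv m, abundancyIndex_eq_sum_inv n]
  exact Finset.sum_lt_sum_of_subset (Nat.divisors_subset_of_dvd hn hmn)
    (Nat.mem_divisors_self n hn) n_notMem (by positivity) fun _ _ _ ↦ by positivity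

end SumDivisors

section Perfect

variable {k m n : ℕ}

lemma sum_divisors_eq_two_mul_of_perfect (hn : n.Perfect) : ∑ d ∈ n.divisors, d = 2 * n :=
  (Nat.perfect_iff_sum_divisors_eq_two_mul hn.2).1 hn

theorem not_dvd_add_one_of_perfect (hn : n.Perfect) (hk : 2 < k)
    (hunits : ∀ u : (ZMod k)ˣ, u ^ 2 = 1) : ¬ k ∣ n + 1 := fun hkn ↦ by
  have dvd_two_mul : k ∣ 2 * n :=
    sum_divisors_eq_two_mul_of_perfect hn ▸ dvd_sum_divisors_of_dvd_add_one hk hunits hkn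
  have dvd_two : k ∣ 2 := (Nat.dvd_add_right dvd_two_mul).1 (hkn.mul_left 2)
  exact Nat.not_dvd_of_pos_of_lt two_pos hk dvd_two

lemma abundancyIndex_eq_two_of_perfect (hn : n.Perfect) : n.abundancyIndex = 2 := by
  rw [Nat.abundancyIndex, sum_divisors_eq_two_mul_of_perfect hn, Nat.cast_mul, Nat.cast_ofNat,
    mul_div_cancel_right₀ _ (Nat.cast_ne_zero.2 hn.2.ne')]

theorem eq_of_dvd_of_perfect (hm : m.Perfect) (hn : n.Perfect) (hmn : m ∣ n) : m = n := by
  by_contra hne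
  have hlt : m.abundancyIndex < n.abundancyIndex := abundancyIndex_lt_of_dvd_of_ne hn.2.ne' hmn hne
  rw [abundancyIndex_eq_two_of_perfect hm, abundancyIndex_eq_two_of_perfect hn] at hlt
  exact lt_irrefl 2 hlt

lemma perfect_six : Nat.Perfect 6 := ⟨by decide, by decide⟩

lemma not_perfect_four : ¬ Nat.Perfect 4 := fun h ↦ absurd h.1 (by decide)

lemma six_dvd_of_perfect_of_mod_four_eq_two (hn : n.Perfect) (h : n % 4 = 2) : 6 ∣ n := by
  obtain ⟨q, rfl⟩ : 2 ∣ n := by omega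
  have hq : Nat.Coprime 2 q := Nat.coprime_two_left.2 (Nat.odd_iff.2 (by omega))
  have sum_divisors_two : ∑ d ∈ Nat.divisors 2, d = 3 := by decide
  have three_mul_sum : 3 * ∑ d ∈ q.divisors, d = 2 * (2 * q) := by
    rw [← sum_divisors_two, ← hq.sum_divisors_mul, sum_divisors_eq_two_mul_of_perfect hn]
  omega

theorem mod_twelve_of_perfect_of_ne_six (hn : n.Perfect) (h6 : n ≠ 6) :
    n % 12 = 1 ∨ n % 12 = 4 ∨ n % 12 = 9 := by
  have not_three_dvd_add_one : ¬ 3 ∣ n + 1 := not_dvd_add_one_of_perfect hn (by decide) (by decide)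
  have not_four_dvd_add_one : ¬ 4 ∣ n + 1 := not_dvd_add_one_of_perfect hn (by decide) (by decide)
  have not_six_dvd : ¬ 6 ∣ n := fun h ↦ h6 (eq_of_dvd_of_perfect perfect_six hn h).symm
  have mod_four_ne_two : n % 4 ≠ 2 := fun h ↦
    not_six_dvd (six_dvd_of_perfect_of_mod_four_eq_two hn h)
  omega

end Perfect

theorem stmt_4 (n m : ℕ) (hn : Nat.Perfect n) (hm : Nat.Perfect m) (hnm : n ≠ m) :
    2 < ((n : ℤ) - m).natAbs := by
  have ne_four {k : ℕ} (hk : k.Perfect) : k ≠ 4 := fun h ↦ not_perfect_four (h ▸ hk)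
  have hn4 : n ≠ 4 := ne_four hn
  have hm4 : m ≠ 4 := ne_four hm
  by_cases hn6 : n = 6
  · have hm_mod := mod_twelve_of_perfect_of_ne_six hm (by omega)
    omega
  have hn_mod := mod_twelve_of_perfect_of_ne_six hn hn6
  by_cases hm6 : m = 6
  · omega
  have hm_mod := mod_twelve_of_perfect_of_ne_six hm hm6
  omega
end
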